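/- For a partition λ (weakly decreasing composition) and any basement permutation σ ∈ S_n, the permuted-basement non-symmetric Macdonald polynomial at q = 1 is independent of both σ and t, and equals the product of elementary symmetric polynomials indexed by the conjugate partition: E^σ_λ(x_1,…,x_n; 1, t) = e_{λ'}(x) = ∏_i e_{λ'_i}(x_1,…,x_n). -/

import Mathlib

open MvPolynomial Finset
open scoped Classical

noncomputable section

variable {n : ℕ}

/-- The augmented filling determined by a filling `G` of the non-basement boxes of
the diagram of shape `lam` with basement `σ`: the entry in row `r`, column `c`
(non-basement columns are `1,…,lam r`; column `0` is the basement, whose entry in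
row `r` is `σ r`). -/
def augFill (lam : Fin n → ℕ) (σ : Equiv.Perm (Fin n))
    (G : (r : Fin n) → Fin (lam r) → Fin n) (r : Fin n) (c : ℕ) : Fin n :=
  if h : 1 ≤ c ∧ c ≤ lam r then G r ⟨c - 1, by omega⟩ else σ r

/-- Non-attacking: no two equal entries in the same column (basement included via
distinctness of `σ`), and no two equal entries in adjacent columns where the
rightmost of the two boxes lies in a row strictly below the other. -/
def NonAttacking (lam : Fin n → ℕ) (F : Fin n → ℕ → Fin n) : Prop :=
  (∀ r r' c, r ≠ r' → 1 ≤ c → c ≤ lam r → c ≤ lam r' → F r c ≠ F r' c) ∧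
  (∀ r r' c, r < r' → (c = 0 ∨ c ≤ lam r) → c + 1 ≤ lam r' → F r c ≠ F r' (c + 1))

/-- The arm of the box in row `r`, column `c` of the augmented diagram of shape `lam`. -/
def armOf (lam : Fin n → ℕ) (r : Fin n) (c : ℕ) : ℕ :=
  (Finset.univ.filter (fun r' => r < r' ∧ lam r' ≤ lam r ∧ c ≤ lam r')).card +
  (Finset.univ.filter (fun r' => r' < r ∧ lam r' < lam r ∧ c - 1 ≤ lam r')).card

/-- The leg of the box in row `r`, column `c`: the number of boxes to its right. -/
def legOf (lam : Fin n → ℕ) (r : Fin n) (c : ℕ) : ℕ := lam r - c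

/-- The major index: the sum of `leg + 1` over all descents, where a descent is a
non-basement box whose entry is strictly larger than the entry directly to its left. -/
def majF (lam : Fin n → ℕ) (F : Fin n → ℕ → Fin n) : ℕ :=
  ∑ r : Fin n, ∑ c ∈ Finset.Icc 1 (lam r),
    if F r (c - 1) < F r c then legOf lam r c + 1 else 0

/-- The inversion-triple condition on the three values `a` (left), `b` (right),
`cc` (the third box), with ties broken as `b₁ < c₂ < a₃`. -/
def InvTriple (a b cc : Fin n) : Prop :=
  (cc < b ∧ b ≤ a) ∨ (b ≤ a ∧ a < cc) ∨ (a < cc ∧ cc < b)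

/-- The number of coinversions: type A and type B triples that are not inversion triples. -/
def coinvF (lam : Fin n → ℕ) (F : Fin n → ℕ → Fin n) : ℕ :=
  (∑ r : Fin n, ∑ r' : Fin n, ((Finset.Icc 1 (lam r')).filter (fun c =>
      r < r' ∧ lam r' ≤ lam r ∧ ¬ InvTriple (F r (c - 1)) (F r c) (F r' c))).card) +
  (∑ r : Fin n, ∑ r' : Fin n, ((Finset.Icc 1 (lam r)).filter (fun c =>
      r' < r ∧ lam r' < lam r ∧ c - 1 ≤ lam r' ∧
        ¬ InvTriple (F r (c - 1)) (F r c) (F r' (c - 1)))).card)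

variable (K : Type) [Field K]

/-- The weight monomial `x^F` of a filling. -/
def fweight (lam : Fin n → ℕ) (F : Fin n → ℕ → Fin n) : MvPolynomial (Fin n) K :=
  ∏ r : Fin n, ∏ c ∈ Finset.Icc 1 (lam r), X (F r c)

/-- The product `∏_{u : F(d(u)) ≠ F(u)} (1−t)/(1−q^{1+leg u} t^{1+arm u})` over
non-basement boxes whose entry differs from the entry directly to the left. -/
def denomProd (lam : Fin n → ℕ) (q t : K) (F : Fin n → ℕ → Fin n) : K :=
  ∏ r : Fin n, ∏ c ∈ Finset.Icc 1 (lam r),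
    if F r (c - 1) ≠ F r c then
      (1 - t) / (1 - q ^ (1 + legOf lam r c) * t ^ (1 + armOf lam r c)) else 1

/-- The permuted-basement non-symmetric Macdonald polynomial `E^σ_λ(x; q, t)`,
via the Haglund–Haiman–Loehr-type combinatorial formula over non-attacking fillings. -/
def macE (lam : Fin n → ℕ) (σ : Equiv.Perm (Fin n)) (q t : K) : MvPolynomial (Fin n) K :=
  ∑ G : ((r : Fin n) → Fin (lam r) → Fin n),
    if NonAttacking lam (augFill lam σ G) then
      C (q ^ majF lam (augFill lam σ G) * t ^ coinvF lam (augFill lam σ G) *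
          denomProd K lam q t (augFill lam σ G)) *
        fweight K lam (augFill lam σ G)
    else 0

/-!
At `q = 1` the power of `q` disappears, and in a partition shape there are no triples of type B
while the arm of a box depends only on its position within its column. The weight of a filling is
therefore a product over pairs of adjacent columns, and summing the columns from right to left
reduces the theorem to a single column: whatever the column `y` to its left, the weights of the
columns of height `m` add up to `e_m`.

For a column with a prescribed set `S` of `m` entries the weights add up to `1`. Choose the
entries from top to bottom, and let `a` be the left neighbour of the top box. If `a ∈ S`,
non-attacking forces the top entry to be `a`, with weight `1`. Otherwise the number of
coinversions created by the top entry `b ∈ S` is the rank of `b` in a cyclic order starting at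
`a`, so the choices of `b` contribute `(1 + t + ⋯ + t ^ (m - 1)) * (1 - t) / (1 - t ^ m) = 1`.
-/

lemma sum_card_filter_lt {ι α M : Type*} [LinearOrder α] [AddCommMonoid M] {κ : ι → α}
    {s : Finset ι} (hκ : Set.InjOn κ s) (f : ℕ → M) :
    ∑ b ∈ s, f #{c ∈ s | κ c < κ b} = ∑ i ∈ range #s, f i := by
  induction s using Finset.induction_on_max_value κ with
  | empty => simp
  | insert a s ha hmax ih =>
    have hlt : ∀ x ∈ s, κ x < κ a := fun x hx ↦
      (hmax x hx).lt_of_ne fun h ↦ ha (hκ (by simp [hx]) (by simp) h ▸ hx)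
    have hrank_a : {c ∈ insert a s | κ c < κ a} = s := by
      rw [filter_insert, if_neg (lt_irrefl _), filter_true_of_mem hlt]
    have hrank : ∀ b ∈ s, {c ∈ insert a s | κ c < κ b} = {c ∈ s | κ c < κ b} := fun b hb ↦ by
      rw [filter_insert, if_neg (hlt b hb).not_gt]
    rw [sum_insert ha, card_insert_of_notMem ha, sum_range_succ, add_comm, hrank_a,
      ← ih (hκ.mono (by simp))]
    exact congrArg (· + f #s) (sum_congr rfl fun b hb ↦ by rw [hrank b hb])

lemma sum_prod_eq_prod_of_dependsOn {R : Type*} [CommSemiring R] {L : ℕ} {A : Fin L → Type*}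
    [∀ c, Fintype (A c)] [∀ c, Nonempty (A c)] {w : ∀ c, (∀ d, A d) → A c → R} {W : Fin L → R}
    (hdep : ∀ c, DependsOn (w c) (Set.Iio c)) (hsum : ∀ c f, ∑ a, w c f a = W c) :
    ∑ f : ∀ c, A c, ∏ c, w c f (f c) = ∏ c, W c := by
  induction L with
  | zero => simp
  | succ L ih =>
    obtain ⟨a₀⟩ := ‹∀ c, Nonempty (A c)› (Fin.last L)
    let restrictW (c : Fin L) (f : ∀ d : Fin L, A d.castSucc) : A c.castSucc → R :=
      w c.castSucc (Fin.snoc f a₀)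
    have hsnoc : ∀ c f a, w c (Fin.snoc f a) = w c (Fin.snoc f a₀) := fun c f a ↦
      hdep c fun d hd ↦ by
        obtain ⟨d, rfl⟩ := Fin.exists_castSucc_eq.2 (Fin.ne_last_of_lt hd)
        simp
    have ih' : ∑ f : ∀ c : Fin L, A c.castSucc, ∏ c, restrictW c f (f c) =
        ∏ c : Fin L, W c.castSucc :=
      ih (fun c f g hfg ↦ hdep _ fun d hd ↦ by
          obtain ⟨d, rfl⟩ := Fin.exists_castSucc_eq.2 (Fin.ne_last_of_lt hd)
          simpa using hfg d (by simpa using hd))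
        fun c f ↦ hsum _ _
    rw [← (Fin.snocEquiv A).sum_comp, Fintype.sum_prod_type_right, Fin.prod_univ_castSucc, ← ih',
      sum_mul]
    refine sum_congr rfl fun f _ ↦ ?_
    rw [← hsum (Fin.last L) (Fin.snoc f a₀), mul_sum]
    refine sum_congr rfl fun a _ ↦ ?_
    simp [Fin.snocEquiv, Fin.prod_univ_castSucc, hsnoc, restrictW]

@[to_additive]
lemma prod_Icc_one_eq_prod_fin {M : Type*} [CommMonoid M] (L : ℕ) (f : ℕ → M) :
    ∏ k ∈ Icc 1 L, f k = ∏ c : Fin L, f (c + 1) := by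
  rw [Fin.prod_univ_eq_prod_range (fun c ↦ f (c + 1)), range_eq_Ico, prod_Ico_add' f 0 L 1]
  rfl

lemma val_lt_card_iff_mem {s : Finset (Fin n)} (hs : IsLowerSet (s : Set (Fin n))) {r : Fin n} :
    r < #s ↔ r ∈ s := by
  constructor
  · contrapose!
    intro hr
    have hsub : s ⊆ Iio r := fun i hi ↦ mem_Iio.2 (not_le.1 fun hri ↦ hr (hs hri hi))
    simpa using card_le_card hsub
  · intro hr
    have hsub : Iic r ⊆ s := fun i hi ↦ hs (mem_Iic.1 hi) hr
    simpa using card_le_card hsub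

lemma ratFunc_X_pow_ne_one {F : Type*} [Field F] {k : ℕ} (hk : k ≠ 0) :
    (RatFunc.X : RatFunc F) ^ k ≠ 1 := fun h ↦
  (RatFunc.transcendental_X (K := F)).pow (Nat.pos_of_ne_zero hk) (h ▸ isAlgebraic_one)

section Column

variable {K} {m : ℕ}

/-- In `Fin n` the difference `a - b` is the length of the cyclic descent from `a` to `b`. -/
lemma invTriple_iff_sub_lt_sub (a b c : Fin n) : InvTriple a b c ↔ a - b < a - c := by
  have hb := Fin.coe_sub_iff_le (a := a) (b := b)
  have hb' := Fin.coe_sub_iff_lt (a := a) (b := b)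
  have hc := Fin.coe_sub_iff_le (a := a) (b := c)
  have hc' := Fin.coe_sub_iff_lt (a := a) (b := c)
  unfold InvTriple
  omega

lemma sum_card_not_invTriple {M : Type*} [AddCommMonoid M] (a : Fin n) (S : Finset (Fin n))
    (f : ℕ → M) :
    ∑ b ∈ S, f #{c ∈ S.erase b | ¬ InvTriple a b c} = ∑ i ∈ range #S, f i := by
  have : NeZero n := ⟨a.pos.ne'⟩
  have hinj : Function.Injective (a - · : Fin n → Fin n) := sub_right_injective
  rw [← sum_card_filter_lt hinj.injOn f]
  refine sum_congr rfl fun b _ ↦ congrArg (f #·) ?_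
  ext c
  have hne : a - c ≠ a - b ↔ c ≠ b := hinj.ne_iff
  rw [mem_filter, mem_filter, mem_erase, invTriple_iff_sub_lt_sub, not_lt, lt_iff_le_and_ne, hne]
  tauto

/-- The factor of `denomProd` at `q = 1` contributed by a box with entry `b`, left neighbour `a`
and arm `k - 1`. -/
def boxFactor (t : K) (k : ℕ) (a b : Fin n) : K :=
  if a ≠ b then (1 - t) / (1 - t ^ k) else 1

lemma sum_boxFactor_eq_one {t : K} (a : Fin n) {S : Finset (Fin n)} (ht : t ^ #S ≠ 1) :
    ∑ b ∈ S with a ∉ S.erase b,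
      t ^ #{c ∈ S.erase b | ¬ InvTriple a b c} * boxFactor t #S a b = 1 := by
  by_cases ha : a ∈ S
  · have hforced : {b ∈ S | a ∉ S.erase b} = {a} := by
      ext b
      simp only [mem_filter, mem_erase, mem_singleton]
      grind
    have hrank : {c ∈ S.erase a | ¬ InvTriple a a c} = ∅ := by
      refine filter_false_of_mem fun c hc ↦ ?_
      have := ne_of_mem_erase hc
      simp only [InvTriple]
      omega
    rw [hforced, sum_singleton, hrank, card_empty, pow_zero, one_mul, boxFactor, if_neg (by simp)]
  · have hfree : {b ∈ S | a ∉ S.erase b} = S :=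
      filter_true_of_mem fun b _ h ↦ ha (mem_of_mem_erase h)
    have hfactor : ∀ b ∈ S, boxFactor t #S a b = (1 - t) / (1 - t ^ #S) := fun b hb ↦
      if_pos (ne_of_mem_of_not_mem hb ha).symm
    rw [hfree, sum_congr rfl fun b hb ↦ by rw [hfactor b hb], ← sum_mul,
      sum_card_not_invTriple a S (t ^ ·), mul_div_assoc', geom_sum_mul_neg,
      div_self (sub_ne_zero.2 ht.symm)]

/-- The restriction of the non-attacking condition of a partition-shaped filling to a column `x`
of height `m` and the first `m` entries `y` of the column to its left. -/
def ColNonAttacking (y x : Fin m → Fin n) : Prop :=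
  Function.Injective x ∧ ∀ i j, i < j → y i ≠ x j

/-- The number of coinversions between a column `x` and the truncation `y` of the column to its
left. Only triples of type A occur in partition shapes. -/
def colCoinv (y x : Fin m → Fin n) : ℕ :=
  ∑ i, #{j | i < j ∧ ¬ InvTriple (y i) (x i) (x j)}

/-- The part of `denomProd` at `q = 1` contributed by a column `x` to the right of `y`: in a
partition shape, a box with `i` boxes above it in a column of height `m` has arm `m - i - 1`. -/
def colDenom (t : K) (y x : Fin m → Fin n) : K :=
  ∏ i : Fin m, boxFactor t (m - i) (y i) (x i)

/-- The columns with set of entries `S` that may be placed to the right of `y`. -/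
def colsWithEntries (y : Fin m → Fin n) (S : Finset (Fin n)) : Finset (Fin m → Fin n) :=
  {x | ColNonAttacking y x ∧ univ.image x = S}

lemma mem_colsWithEntries {y x : Fin m → Fin n} {S : Finset (Fin n)} :
    x ∈ colsWithEntries y S ↔ ColNonAttacking y x ∧ univ.image x = S := by
  simp [colsWithEntries]

lemma colNonAttacking_cons {y : Fin (m + 1) → Fin n} {b : Fin n} {x : Fin m → Fin n} :
    ColNonAttacking y (Fin.cons b x : Fin (m + 1) → Fin n) ↔
      (b ∉ univ.image x ∧ y 0 ∉ univ.image x) ∧ ColNonAttacking (Fin.tail y) x := by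
  simp only [ColNonAttacking, Fin.cons_injective_iff, Fin.forall_fin_succ, Fin.tail,
    Fin.cons_zero, Fin.cons_succ, Fin.succ_lt_succ_iff, Set.mem_range, mem_image, mem_univ,
    true_and, Fin.succ_pos, Fin.not_lt_zero, false_imp_iff, forall_const, not_exists]
  grind

lemma cons_mem_colsWithEntries {y : Fin (m + 1) → Fin n} {b : Fin n} {x : Fin m → Fin n}
    {S : Finset (Fin n)} :
    (Fin.cons b x : Fin (m + 1) → Fin n) ∈ colsWithEntries y S ↔
      (b ∈ S ∧ y 0 ∉ S.erase b) ∧ x ∈ colsWithEntries (Fin.tail y) (S.erase b) := by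
  have himage : univ.image (Fin.cons b x : Fin (m + 1) → Fin n) = insert b (univ.image x) := by
    ext c
    simp [Fin.exists_fin_succ, eq_comm]
  rw [mem_colsWithEntries, mem_colsWithEntries, colNonAttacking_cons, himage]
  constructor
  · rintro ⟨⟨⟨hb, hy⟩, hx⟩, rfl⟩
    simpa [erase_insert hb, hx] using hy
  · rintro ⟨⟨hb, hy⟩, hx, himx⟩
    exact ⟨⟨himx ▸ ⟨notMem_erase b S, hy⟩, hx⟩, himx ▸ insert_erase hb⟩

lemma sum_colsWithEntries_succ {M : Type*} [AddCommMonoid M] (y : Fin (m + 1) → Fin n)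
    (S : Finset (Fin n)) (f : (Fin (m + 1) → Fin n) → M) :
    ∑ x ∈ colsWithEntries y S, f x = ∑ b ∈ S with y 0 ∉ S.erase b,
      ∑ x ∈ colsWithEntries (Fin.tail y) (S.erase b), f (Fin.cons b x) := by
  rw [sum_sigma']
  refine (sum_bij' (fun p _ ↦ Fin.cons p.1 p.2) (fun x _ ↦ ⟨x 0, Fin.tail x⟩) ?_ ?_ ?_ ?_ ?_).symm
  · rintro ⟨b, x⟩ h
    simpa [cons_mem_colsWithEntries] using h
  · intro x h
    rw [← Fin.cons_self_tail x, cons_mem_colsWithEntries] at h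
    simpa using h
  all_goals simp

lemma colCoinv_cons (y : Fin (m + 1) → Fin n) (b : Fin n) {x : Fin m → Fin n}
    (hx : Function.Injective x) :
    colCoinv y (Fin.cons b x : Fin (m + 1) → Fin n) =
      #{c ∈ univ.image x | ¬ InvTriple (y 0) b c} + colCoinv (Fin.tail y) x := by
  rw [filter_image, card_image_of_injective _ hx]
  simp [colCoinv, Fin.sum_univ_succ, Fin.card_filter_univ_succ, Fin.tail]
  rfl

lemma colDenom_cons (t : K) (y : Fin (m + 1) → Fin n) (b : Fin n) (x : Fin m → Fin n) :
    colDenom t y (Fin.cons b x : Fin (m + 1) → Fin n) =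
      boxFactor t (m + 1) (y 0) b * colDenom t (Fin.tail y) x := by
  simp [colDenom, Fin.prod_univ_succ, Fin.tail]

lemma sum_colsWithEntries_eq_one {t : K} (ht : ∀ k ∈ Icc 1 m, t ^ k ≠ 1) (y : Fin m → Fin n)
    {S : Finset (Fin n)} (hS : #S = m) :
    ∑ x ∈ colsWithEntries y S, t ^ colCoinv y x * colDenom t y x = 1 := by
  induction m generalizing S with
  | zero =>
    obtain rfl := card_eq_zero.1 hS
    simp [colsWithEntries, ColNonAttacking, colCoinv, colDenom, Function.injective_of_subsingleton]
  | succ m ih =>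
    have ht' : t ^ #S ≠ 1 := ht _ (by simp [hS])
    rw [sum_colsWithEntries_succ, ← sum_boxFactor_eq_one (y 0) ht']
    refine sum_congr rfl fun b hb ↦ ?_
    have hcard : #(S.erase b) = m := by
      rw [card_erase_of_mem (mem_filter.1 hb).1, hS, Nat.add_sub_cancel]
    rw [← mul_one (_ * boxFactor t #S (y 0) b),
      ← ih (fun k hk ↦ ht k (Icc_subset_Icc_right m.le_succ hk)) (Fin.tail y) hcard, mul_sum]
    refine sum_congr rfl fun x hx ↦ ?_
    obtain ⟨⟨hinj, -⟩, himage⟩ := mem_colsWithEntries.1 hx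
    rw [colCoinv_cons y b hinj, colDenom_cons, himage, hS, pow_add]
    ring

/-- The contribution to `macE` at `q = 1` of a column `x` placed to the right of `y`. -/
def colWeight (t : K) (y x : Fin m → Fin n) : MvPolynomial (Fin n) K :=
  if ColNonAttacking y x then C (t ^ colCoinv y x * colDenom t y x) * ∏ i, X (x i) else 0

lemma sum_colWeight {t : K} (ht : ∀ k ∈ Icc 1 m, t ^ k ≠ 1) (y : Fin m → Fin n) :
    ∑ x, colWeight t y x = esymm (Fin n) K m := by
  have hmaps : ∀ x ∈ ({x | ColNonAttacking y x} : Finset (Fin m → Fin n)),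
      univ.image x ∈ powersetCard m univ := fun x hx ↦ by
    simp [mem_powersetCard, card_image_of_injective _ (mem_filter.1 hx).2.1]
  simp only [colWeight]
  rw [← sum_filter, ← sum_fiberwise_of_maps_to hmaps, esymm]
  refine sum_congr rfl fun S hS ↦ ?_
  rw [filter_filter, ← one_mul (∏ i ∈ S, X i), ← C_1,
    ← sum_colsWithEntries_eq_one ht y (mem_powersetCard.1 hS).2, map_sum, sum_mul]
  refine sum_congr rfl fun x hx ↦ ?_
  obtain ⟨⟨hinj, -⟩, rfl⟩ := mem_colsWithEntries.1 hx
  rw [prod_image hinj.injOn]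

end Column

section Diagram

variable {K} {lam : Fin n → ℕ} {F : Fin n → ℕ → Fin n} {k : ℕ}

/-- The part `λ'_k` of the conjugate partition, i.e. the height of column `k`. -/
def colLen (lam : Fin n → ℕ) (k : ℕ) : ℕ := #{i | k ≤ lam i}

lemma colLen_le (lam : Fin n → ℕ) (k : ℕ) : colLen lam k ≤ n :=
  (card_le_univ _).trans_eq (Fintype.card_fin n)

lemma lt_colLen_iff (hlam : Antitone lam) {r : Fin n} : r < colLen lam k ↔ k ≤ lam r := by
  have hlower : IsLowerSet (({i | k ≤ lam i} : Finset (Fin n)) : Set (Fin n)) := fun i j hji hi ↦ by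
    simp only [coe_filter, mem_univ, true_and, Set.mem_ofPred_eq] at hi ⊢
    exact hi.trans (hlam hji)
  rw [colLen, val_lt_card_iff_mem hlower, mem_filter]
  simp only [mem_univ, true_and]

/-- The row of the `i`-th box of column `k`: columns of a partition shape occupy the first rows. -/
def colRow (lam : Fin n → ℕ) (k : ℕ) : Fin (colLen lam k) ↪o Fin n :=
  Fin.castLEOrderEmb (colLen_le lam k)

lemma le_colRow (hlam : Antitone lam) (i : Fin (colLen lam k)) : k ≤ lam (colRow lam k i) :=
  (lt_colLen_iff hlam).1 i.2

lemma filter_le_eq_map_colRow (hlam : Antitone lam) :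
    ({r | k ≤ lam r} : Finset (Fin n)) = univ.map (colRow lam k).toEmbedding := by
  ext r
  simp only [mem_filter, mem_univ, true_and, mem_map]
  exact ⟨fun h ↦ ⟨⟨r, (lt_colLen_iff hlam).2 h⟩, rfl⟩, fun ⟨i, hi⟩ ↦ hi ▸ le_colRow hlam i⟩

lemma card_filter_le_and (hlam : Antitone lam) (p : Fin n → Prop) [DecidablePred p] :
    #{r | k ≤ lam r ∧ p r} = #{i | p (colRow lam k i)} := by
  rw [← filter_filter, filter_le_eq_map_colRow hlam, filter_map, card_map]
  rfl

@[to_additive]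
lemma prod_rows_eq_prod_cols {M : Type*} [CommMonoid M] (hlam : Antitone lam)
    (g : Fin n → ℕ → M) :
    ∏ r, ∏ k ∈ Icc 1 (lam r), g r k =
      ∏ c : Fin (univ.sup lam), ∏ i, g (colRow lam (c + 1) i) (c + 1) := by
  have hswap : ∏ r, ∏ k ∈ Icc 1 (lam r), g r k =
      ∏ k ∈ Icc 1 (univ.sup lam), ∏ r with k ≤ lam r, g r k :=
    prod_comm' fun r k ↦ by
      have := le_sup (f := lam) (mem_univ r)
      simp only [mem_univ, mem_Icc, mem_filter]
      lia
  rw [hswap, prod_Icc_one_eq_prod_fin]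
  exact prod_congr rfl fun c _ ↦ by rw [filter_le_eq_map_colRow hlam, prod_map]; rfl

/-- The entries in column `d` of `F`, truncated to the rows that meet column `k`. -/
def colEntries (lam : Fin n → ℕ) (F : Fin n → ℕ → Fin n) (k d : ℕ) : Fin (colLen lam k) → Fin n :=
  fun i ↦ F (colRow lam k i) d

lemma nonAttacking_iff_forall_col (hlam : Antitone lam) :
    NonAttacking lam F ↔ ∀ c : Fin (univ.sup lam),
      ColNonAttacking (colEntries lam F (c + 1) c) (colEntries lam F (c + 1) (c + 1)) := by
  constructor
  · rintro ⟨hcol, hadj⟩ c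
    refine ⟨fun i j hij ↦ ?_, fun i j hij ↦ ?_⟩
    · by_contra hne
      exact hcol _ _ (c + 1) ((colRow lam _).injective.ne hne) (by lia) (le_colRow hlam i)
        (le_colRow hlam j) hij
    · exact hadj _ _ c ((colRow lam _).lt_iff_lt.2 hij) (.inr (Nat.le_of_lt (le_colRow hlam i)))
        (le_colRow hlam j)
  · refine fun h ↦ ⟨fun r r' k hne hk hr hr' heq ↦ ?_, fun r r' k hlt _ hr' ↦ ?_⟩
    · obtain ⟨k, rfl⟩ := Nat.exists_eq_add_of_le' hk
      have hinj := (h ⟨k, hr.trans (le_sup (mem_univ r))⟩).1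
      exact hne (Fin.ext (Fin.mk.inj_iff.1 (hinj (a₁ := ⟨r, (lt_colLen_iff hlam).2 hr⟩)
        (a₂ := ⟨r', (lt_colLen_iff hlam).2 hr'⟩) heq)))
    · exact (h ⟨k, hr'.trans (le_sup (mem_univ r'))⟩).2
        ⟨r, (lt_colLen_iff hlam).2 (hr'.trans (hlam hlt.le))⟩ ⟨r', (lt_colLen_iff hlam).2 hr'⟩ hlt

lemma coinvF_eq_sum_rows (hlam : Antitone lam) :
    coinvF lam F = ∑ r, ∑ k ∈ Icc 1 (lam r),
      #{r' | k ≤ lam r' ∧ r < r' ∧ ¬ InvTriple (F r (k - 1)) (F r k) (F r' k)} := by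
  have htypeB : ∀ r r', #{k ∈ Icc 1 (lam r) | r' < r ∧ lam r' < lam r ∧ k - 1 ≤ lam r' ∧
      ¬ InvTriple (F r (k - 1)) (F r k) (F r' (k - 1))} = 0 := fun r r' ↦
    card_eq_zero.2 <| filter_false_of_mem fun k _ ⟨hlt, hlam_lt, _⟩ ↦
      (hlam hlt.le).not_gt hlam_lt
  simp only [coinvF, htypeB, sum_const_zero, add_zero]
  refine sum_congr rfl fun r _ ↦ ?_
  simp only [card_eq_sum_ones]
  refine sum_comm' fun r' k ↦ ?_
  simp only [mem_univ, mem_Icc, mem_filter, true_and]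
  constructor
  · rintro ⟨⟨hk, hkr'⟩, hlt, hle, htriple⟩
    exact ⟨⟨hkr', hlt, htriple⟩, hk, hkr'.trans hle⟩
  · rintro ⟨⟨hkr', hlt, htriple⟩, hk, -⟩
    exact ⟨⟨hk, hkr'⟩, hlt, hlam hlt.le, htriple⟩

lemma coinvF_eq_sum_cols (hlam : Antitone lam) :
    coinvF lam F = ∑ c : Fin (univ.sup lam),
      colCoinv (colEntries lam F (c + 1) c) (colEntries lam F (c + 1) (c + 1)) := by
  rw [coinvF_eq_sum_rows hlam, sum_rows_eq_sum_cols hlam]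
  refine sum_congr rfl fun c _ ↦ sum_congr rfl fun i _ ↦ ?_
  rw [card_filter_le_and hlam]
  simp only [OrderEmbedding.lt_iff_lt]
  rfl

lemma one_add_armOf_colRow (hlam : Antitone lam) (i : Fin (colLen lam k)) :
    1 + armOf lam (colRow lam k i) k = colLen lam k - i := by
  have hbelow : ∀ r' : Fin n, colRow lam k i < r' ∧ lam r' ≤ lam (colRow lam k i) ∧ k ≤ lam r' ↔
      k ≤ lam r' ∧ colRow lam k i < r' := fun r' ↦
    ⟨fun h ↦ ⟨h.2.2, h.1⟩, fun h ↦ ⟨h.2, hlam h.2.le, h.1⟩⟩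
  have habove : ∀ r' : Fin n, ¬ (r' < colRow lam k i ∧ lam r' < lam (colRow lam k i) ∧
      k - 1 ≤ lam r') := fun r' ⟨hlt, hlam_lt, _⟩ ↦ (hlam hlt.le).not_gt hlam_lt
  rw [armOf, filter_congr fun r' _ ↦ hbelow r', filter_false_of_mem fun r' _ ↦ habove r',
    card_filter_le_and hlam]
  simp only [OrderEmbedding.lt_iff_lt, filter_lt_eq_Ioi, Fin.card_Ioi, card_empty]
  lia

lemma denomProd_one_eq_prod_cols (hlam : Antitone lam) (t : K) :
    denomProd K lam 1 t F = ∏ c : Fin (univ.sup lam),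
      colDenom t (colEntries lam F (c + 1) c) (colEntries lam F (c + 1) (c + 1)) := by
  simp only [denomProd, prod_rows_eq_prod_cols hlam, one_add_armOf_colRow hlam, one_pow, one_mul]
  rfl

lemma fweight_eq_prod_cols (hlam : Antitone lam) :
    fweight K lam F = ∏ c : Fin (univ.sup lam), ∏ i, X (colEntries lam F (c + 1) (c + 1) i) :=
  prod_rows_eq_prod_cols hlam fun r k ↦ X (F r k)

lemma macE_one_eq_sum_prod_colWeight (hlam : Antitone lam) (σ : Equiv.Perm (Fin n)) (t : K) :
    macE K lam σ 1 t = ∑ G, ∏ c : Fin (univ.sup lam),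
      colWeight t (colEntries lam (augFill lam σ G) (c + 1) c)
        (colEntries lam (augFill lam σ G) (c + 1) (c + 1)) := by
  refine sum_congr rfl fun G _ ↦ ?_
  simp only [colWeight, prod_ite_zero, mem_univ, true_imp_iff, nonAttacking_iff_forall_col hlam]
  refine if_congr Iff.rfl ?_ rfl
  rw [one_pow, one_mul, coinvF_eq_sum_cols hlam, denomProd_one_eq_prod_cols hlam,
    fweight_eq_prod_cols hlam, ← prod_pow_eq_pow_sum, ← prod_mul_distrib, map_prod,
    ← prod_mul_distrib]

/-- The filling of a partition shape with prescribed columns; the index `c : Fin λ₁` stands for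
column `c + 1`. -/
def fillingOfCols (hlam : Antitone lam) :
    ((c : Fin (univ.sup lam)) → Fin (colLen lam (c + 1)) → Fin n) ≃
      ((r : Fin n) → Fin (lam r) → Fin n) where
  toFun f r c := f ⟨c, c.2.trans_le (le_sup (mem_univ r))⟩ ⟨r, (lt_colLen_iff hlam).2 c.2⟩
  invFun G c i := G (colRow lam (c + 1) i) ⟨c, le_colRow hlam i⟩
  left_inv _ := rfl
  right_inv _ := rfl

lemma colEntries_augFill_fillingOfCols (hlam : Antitone lam) (σ : Equiv.Perm (Fin n))
    (f : (c : Fin (univ.sup lam)) → Fin (colLen lam (c + 1)) → Fin n) (c : Fin (univ.sup lam)) :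
    colEntries lam (augFill lam σ (fillingOfCols hlam f)) (c + 1) (c + 1) = f c :=
  funext fun i ↦ dif_pos ⟨Nat.le_add_left 1 c, le_colRow hlam i⟩

lemma dependsOn_augFill_fillingOfCols (hlam : Antitone lam) (σ : Equiv.Perm (Fin n)) (r : Fin n)
    (c : Fin (univ.sup lam)) :
    DependsOn (fun f ↦ augFill lam σ (fillingOfCols hlam f) r c) (Set.Iio c) := by
  intro f g hfg
  simp only [augFill]
  split_ifs with h
  · exact congrFun (hfg ⟨c - 1, by lia⟩ (Fin.lt_def.2 (by simp; lia))) _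
  · rfl

theorem macE_partition_q_one_general (hlam : Antitone lam) (σ : Equiv.Perm (Fin n)) {t : K}
    (ht : ∀ k ∈ Icc 1 n, t ^ k ≠ 1) :
    macE K lam σ 1 t = ∏ k ∈ Icc 1 (univ.sup lam), esymm (Fin n) K #{i | k ≤ lam i} := by
  have (c : Fin (univ.sup lam)) : Nonempty (Fin (colLen lam (c + 1)) → Fin n) := ⟨colRow lam _⟩
  let prevCol (f : ∀ c : Fin (univ.sup lam), Fin (colLen lam (c + 1)) → Fin n)
      (c : Fin (univ.sup lam)) :=
    colEntries lam (augFill lam σ (fillingOfCols hlam f)) (c + 1) c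
  have hdep : ∀ c, DependsOn (fun f ↦ colWeight t (prevCol f c)) (Set.Iio c) := fun c f g hfg ↦
    congrArg (colWeight t) <| funext fun i ↦
      dependsOn_augFill_fillingOfCols hlam σ (colRow lam (c + 1) i) c hfg
  have hsum : ∀ c f, ∑ x, colWeight t (prevCol f c) x = esymm (Fin n) K (colLen lam (c + 1)) :=
    fun c f ↦ sum_colWeight (fun k hk ↦ ht k (Icc_subset_Icc_right (colLen_le lam _) hk)) _
  rw [macE_one_eq_sum_prod_colWeight hlam, ← (fillingOfCols hlam).sum_comp,
    prod_Icc_one_eq_prod_fin]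
  simp only [colEntries_augFill_fillingOfCols]
  exact sum_prod_eq_prod_of_dependsOn hdep hsum

end Diagram

/-- for a partition `λ` and any basement `σ`, at `q = 1` the
permuted-basement Macdonald polynomial is independent of `σ` and `t` and equals
`e_{λ'}(x) = ∏_{k=1}^{λ₁} e_{λ'_k}(x)`, where `λ'_k = #{i : λ i ≥ k}`. -/
theorem macE_partition_q_one {n : ℕ} (lam : Fin n → ℕ)
    (hpart : ∀ i j : Fin n, i ≤ j → lam j ≤ lam i) (σ : Equiv.Perm (Fin n)) :
    macE (RatFunc ℂ) lam σ 1 RatFunc.X =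
      ∏ k ∈ Finset.Icc 1 (Finset.univ.sup lam),
        esymm (Fin n) (RatFunc ℂ) ((Finset.univ.filter (fun i => k ≤ lam i)).card) := by
  exact macE_partition_q_one_general hpart σ fun k hk ↦
    ratFunc_X_pow_ne_one (Nat.one_le_iff_ne_zero.1 (mem_Icc.1 hk).1)

end
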